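/- In a mixed graph M, let p = ⟨w_0, w_1, …, w_{m+1}⟩ (m ≥ 0) be a path such that no internal vertex of p is a collider on p. Then every internal vertex w_i (1 ≤ i ≤ m) is an ancestor of w_0 or an ancestor of w_{m+1} in M. -/

import Mathlib

/-- Marks at edge ends in a partial mixed graph. -/
inductive Mark : Type
  | tail
  | arrow
  | circle
deriving DecidableEq

/-- A partial mixed graph (PMG): a symmetric irreflexive adjacency relation together
with, for each ordered pair `(a, b)` of adjacent vertices, a mark `mark a b` at `b` on
the edge `a–b`, such that no edge has tails at both endpoints. -/
structure PMG (V : Type) where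
  adj : V → V → Prop
  symm : ∀ a b, adj a b → adj b a
  irrefl : ∀ a, ¬ adj a a
  mark : V → V → Mark
  noDoubleTail : ∀ a b, adj a b → ¬ (mark a b = Mark.tail ∧ mark b a = Mark.tail)

namespace PMG

variable {V : Type}

/-- `a → b`: adjacent, tail at `a`, arrowhead at `b`. -/
def dir (G : PMG V) (a b : V) : Prop :=
  G.adj a b ∧ G.mark b a = Mark.tail ∧ G.mark a b = Mark.arrow

/-- `a ↔ b`: adjacent, arrowheads at both endpoints. -/
def bidir (G : PMG V) (a b : V) : Prop :=
  G.adj a b ∧ G.mark b a = Mark.arrow ∧ G.mark a b = Mark.arrow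

/-- `a` is an ancestor of `b`: `a = b` or there is a directed path from `a` to `b`. -/
def Anc (G : PMG V) (a b : V) : Prop :=
  Relation.ReflTransGen G.dir a b

/-- `a` is an ancestor of some vertex of the set `S`. -/
def AncSet (G : PMG V) (a : V) (S : Set V) : Prop :=
  ∃ v ∈ S, G.Anc a v

/-- A mixed graph: a PMG with no circle marks. -/
def IsMixed (G : PMG V) : Prop :=
  ∀ a b, G.adj a b → G.mark a b ≠ Mark.circle

/-- Ancestral: no directed cycles and no almost directed cycles. -/
def Ancestral (G : PMG V) : Prop :=
  ∀ a b, G.Anc a b → a ≠ b → ¬ G.dir b a ∧ ¬ G.bidir a b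

/-- Unshielded collider `(a, b, c)`: `a, c` both adjacent to `b`, `a` and `c`
distinct and nonadjacent, arrowheads at `b` on both edges. -/
def UnshieldedCollider (G : PMG V) (a b c : V) : Prop :=
  a ≠ c ∧ G.adj a b ∧ G.adj c b ∧ ¬ G.adj a c ∧
    G.mark a b = Mark.arrow ∧ G.mark c b = Mark.arrow

/-- `M` is a completion of the PMG `H`: same vertices and adjacencies, all non-circle
marks of `H` occur identically in `M`, `M` is an ancestral mixed graph, and every
unshielded collider of `M` is already an unshielded collider of `H`. -/
def Completion (H M : PMG V) : Prop :=
  (∀ a b, M.adj a b ↔ H.adj a b) ∧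
  (∀ a b, H.adj a b → H.mark a b ≠ Mark.circle → M.mark a b = H.mark a b) ∧
  M.IsMixed ∧ M.Ancestral ∧
  (∀ a b c, M.UnshieldedCollider a b c → H.UnshieldedCollider a b c)

/-- An edge usable in a possible directed path from `a` to `b`:
adjacent, no arrowhead at `a`, no tail at `b`. -/
def possEdge (G : PMG V) (a b : V) : Prop :=
  G.adj a b ∧ G.mark b a ≠ Mark.arrow ∧ G.mark a b ≠ Mark.tail

/-- A circle edge: adjacent with circle marks at both endpoints. -/
def circleEdge (G : PMG V) (a b : V) : Prop :=
  G.adj a b ∧ G.mark a b = Mark.circle ∧ G.mark b a = Mark.circle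

/-- `p 0, …, p n` is a path: distinct vertices, consecutive ones adjacent. -/
def IsPathOn (G : PMG V) (p : ℕ → V) (n : ℕ) : Prop :=
  (∀ i ≤ n, ∀ j ≤ n, p i = p j → i = j) ∧ ∀ i < n, G.adj (p i) (p (i+1))

/-- `p 0, …, p n` is a possible directed path. -/
def IsPossDirPathOn (G : PMG V) (p : ℕ → V) (n : ℕ) : Prop :=
  (∀ i ≤ n, ∀ j ≤ n, p i = p j → i = j) ∧ ∀ i < n, G.possEdge (p i) (p (i+1))

/-- `p 0, …, p n` is a circle path. -/
def IsCirclePathOn (G : PMG V) (p : ℕ → V) (n : ℕ) : Prop :=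
  (∀ i ≤ n, ∀ j ≤ n, p i = p j → i = j) ∧ ∀ i < n, G.circleEdge (p i) (p (i+1))

/-- The path `p 0, …, p n` is uncovered: any two nonconsecutive neighbours of an
internal vertex are nonadjacent. -/
def UncoveredOn (G : PMG V) (p : ℕ → V) (n : ℕ) : Prop :=
  ∀ i, i + 2 ≤ n → ¬ G.adj (p i) (p (i+2))

/-- `F_x` relative to `V'`: the vertices of `V'` adjacent to `x` whose edge carries
a circle or an arrowhead at `x`. -/
def Fset (G : PMG V) (V' : Set V) (x : V) : Set V :=
  {v | v ∈ V' ∧ G.adj v x ∧ (G.mark v x = Mark.circle ∨ G.mark v x = Mark.arrow)}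

/-- `p 0, …, p n` is an unbridged path relative to `V'` in `G`: an uncovered circle
path with at least one edge, lying in `G[−V']`, with
`F_{p 0} \ F_{p 1} ≠ ∅` and `F_{p n} \ F_{p (n-1)} ≠ ∅`. -/
def UnbridgedOn (G : PMG V) (V' : Set V) (p : ℕ → V) (n : ℕ) : Prop :=
  1 ≤ n ∧ G.IsCirclePathOn p n ∧ G.UncoveredOn p n ∧
  (∀ i ≤ n, p i ∉ V') ∧
  (G.Fset V' (p 0) \ G.Fset V' (p 1)).Nonempty ∧
  (G.Fset V' (p n) \ G.Fset V' (p (n-1))).Nonempty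

/-- The set `S_A`: `A` together with all vertices adjacent to `A` whose edge has an
arrowhead at `A`. -/
def SA (G : PMG V) (A : V) : Set V :=
  {A} ∪ {v | G.adj v A ∧ G.mark v A = Mark.arrow}

end PMG

/-- In a mixed graph `M`, on a path `⟨w_0, …, w_{m+1}⟩` none of whose internal
vertices is a collider, every internal vertex is an ancestor of `w_0` or of
`w_{m+1}`. -/
theorem noncollider_path_ancestor {V : Type} (M : PMG V) (hM : M.IsMixed)
    (p : ℕ → V) (m : ℕ) (hpath : M.IsPathOn p (m+1))
    (hnc : ∀ i, 1 ≤ i → i ≤ m →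
      ¬ (M.mark (p (i-1)) (p i) = Mark.arrow ∧
         M.mark (p (i+1)) (p i) = Mark.arrow)) :
    ∀ i, 1 ≤ i → i ≤ m → M.Anc (p i) (p 0) ∨ M.Anc (p i) (p (m+1)) := by
  have key : ∀ a b, M.adj a b → M.mark b a ≠ Mark.arrow → M.dir a b := by
    intro a b hab h
    have h1 := hM a b hab
    have h2 := hM b a (M.symm a b hab)
    have h3 := M.noDoubleTail a b hab
    refine ⟨hab, ?_, ?_⟩
    · cases hb : M.mark b a <;> simp_all
    · cases hb : M.mark b a <;> cases ha : M.mark a b <;> simp_all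
  have L : ∀ i, i ≤ m → M.dir (p (i+1)) (p i) → M.Anc (p (i+1)) (p 0) := by
    intro i
    induction i with
    | zero => intro _ h; exact Relation.ReflTransGen.single h
    | succ i ih =>
      intro hi h
      refine Relation.ReflTransGen.head h (ih (by omega) ?_)
      apply key _ _ (M.symm _ _ (hpath.2 i (by omega)))
      intro h'
      exact hnc (i+1) (by omega) hi ⟨h', h.2.2⟩
  have R : ∀ k i, i + k = m → M.dir (p i) (p (i+1)) → M.Anc (p i) (p (m+1)) := by
    intro k
    induction k with
    | zero =>
      intro i hi h
      obtain rfl : i = m := by omega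
      exact Relation.ReflTransGen.single h
    | succ k ih =>
      intro i hi h
      refine Relation.ReflTransGen.head h (ih (i+1) (by omega) ?_)
      apply key _ _ (hpath.2 (i+1) (by omega))
      intro h'
      exact hnc (i+1) (by omega) (by omega) ⟨h.2.2, h'⟩
  intro i h1 hi
  by_cases h : M.mark (p (i+1)) (p i) = Mark.arrow
  · left
    obtain ⟨j, rfl⟩ : ∃ j, i = j + 1 := ⟨i - 1, by omega⟩
    apply L j (by omega)
    apply key _ _ (M.symm _ _ (hpath.2 j (by omega)))
    intro h'
    exact hnc (j+1) h1 hi ⟨h', h⟩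
  · right
    exact R (m - i) i (by omega) (key _ _ (hpath.2 i (by omega)) h)
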